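/- Assume f satisfies (f_reg), (f_eq), (f_0) and (f_subc) with constant η ∈ (0,1), and let R1 = 0. There exist constants K1 > 0, K2 ≥ 0 and d̄ > 1/η such that for every d ≥ d̄, every solution u of the Cauchy problem with datum d on [0,R2] satisfies R2^N · H(r) + (N/p*) · R2^{N-1} · ( |u(r)|^p/p + |u'(r)|^p/p' ) ≥ K1 · f*(d) · d · r0^N − K2 for every r ∈ [r0, R2], where N/p* := 0 if p* = +∞. -/

import Mathlib

open Real Set Filter Topology

noncomputable def phip (p s : ℝ) : ℝ := |s| ^ (p - 2) * s

def Freg (f : ℝ → ℝ) : Prop :=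
  ContinuousOn f (Ici 0) ∧ ContDiffOn ℝ 1 f (Ioi 0)

def Feq (f : ℝ → ℝ) : Prop :=
  f 0 = 0 ∧ f 1 = 0 ∧ (∀ s : ℝ, 0 < s → s < 1 → f s < 0) ∧ (∀ s : ℝ, 1 < s → 0 < f s)

def Fzero (p : ℝ) (f : ℝ → ℝ) : Prop :=
  ∃ c : ℝ, ∀ᶠ s in 𝓝[>] (0:ℝ), c ≤ f s / s ^ (p - 1)

noncomputable def pstar (p : ℝ) (N : ℕ) : EReal :=
  if p < (N:ℝ) then (((N:ℝ) * p / ((N:ℝ) - p) : ℝ) : EReal) else ⊤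

noncomputable def fstar (f : ℝ → ℝ) (s : ℝ) : ℝ := sSup (f '' Icc 1 s)

noncomputable def Fint (f : ℝ → ℝ) (s : ℝ) : ℝ := ∫ σ in (1:ℝ)..s, f σ

def Fsubl (p : ℝ) (f : ℝ → ℝ) : Prop :=
  ∃ M : ℝ, 0 < M ∧ ∀ ε > 0, ∀ᶠ s in atTop, f s / s ^ (p - 1) ≤ M + ε

def FsubcWith (p : ℝ) (N : ℕ) (f : ℝ → ℝ) (η : ℝ) : Prop :=
  (∀ c : ℝ, ∃ᶠ s in atTop, c < f s / s ^ (p - 1)) ∧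
  0 < η ∧ η < 1 ∧
  ∃ L : ℝ, (L : EReal) < pstar p N ∧
    ∀ᶠ s in atTop, fstar f s * s / Fint f (η * s) ≤ L

def Fsubc (p : ℝ) (N : ℕ) (f : ℝ → ℝ) : Prop := ∃ η : ℝ, FsubcWith p N f η

/-- A radial solution of the Neumann problem on `[R1,R2]`. -/
def NeumannSol (p : ℝ) (N : ℕ) (R1 R2 : ℝ) (f u : ℝ → ℝ) : Prop :=
  (∀ x ∈ Icc R1 R2, DifferentiableAt ℝ u x) ∧
  ContinuousOn (deriv u) (Icc R1 R2) ∧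
  (∀ x ∈ Icc R1 R2, 0 < u x) ∧
  deriv u R1 = 0 ∧ deriv u R2 = 0 ∧
  ContinuousOn (fun x => x ^ (N - 1) * phip p (deriv u x)) (Icc R1 R2) ∧
  ∀ x ∈ Ioc R1 R2,
    HasDerivAt (fun t => t ^ (N - 1) * phip p (deriv u t)) (-(x ^ (N - 1)) * f (u x)) x

noncomputable def fhat (f : ℝ → ℝ) (s : ℝ) : ℝ := if 0 ≤ s then f s else 0

noncomputable def Fhat (f : ℝ → ℝ) (s : ℝ) : ℝ := ∫ σ in (1:ℝ)..s, fhat f σ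

/-- A solution of the Cauchy problem with datum `d`, for the nonlinearity `g`. -/
def CauchySol (p : ℝ) (N : ℕ) (R1 R2 : ℝ) (g u : ℝ → ℝ) (d : ℝ) : Prop :=
  (∀ x ∈ Icc R1 R2, DifferentiableAt ℝ u x) ∧
  ContinuousOn (deriv u) (Icc R1 R2) ∧
  u R1 = d ∧ deriv u R1 = 0 ∧
  ContinuousOn (fun x => x ^ (N - 1) * phip p (deriv u x)) (Icc R1 R2) ∧
  ∀ x ∈ Ioc R1 R2,
    HasDerivAt (fun t => t ^ (N - 1) * phip p (deriv u t)) (-(x ^ (N - 1)) * g (u x)) x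

noncomputable def rOne (R1 R2 : ℝ) (u : ℝ → ℝ) : ℝ :=
  sSup {x | x ∈ Icc R1 R2 ∧ ∀ s ∈ Ico R1 x, 0 < u s}

noncomputable def rZero (R2 η d : ℝ) (u : ℝ → ℝ) : ℝ :=
  sSup {x | x ∈ Icc 0 R2 ∧ ∀ s ∈ Ico 0 x, η * d < u s}

noncomputable def energy (p : ℝ) (f u : ℝ → ℝ) (x : ℝ) : ℝ :=
  |deriv u x| ^ p / (p / (p - 1)) + Fhat f (u x)

def NonConstOn (R1 R2 : ℝ) (u : ℝ → ℝ) : Prop :=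
  ∃ x ∈ Icc R1 R2, ∃ x' ∈ Icc R1 R2, u x ≠ u x'

def DistinctOn (R1 R2 : ℝ) (u v : ℝ → ℝ) : Prop :=
  ∃ x ∈ Icc R1 R2, u x ≠ v x

noncomputable def nOverPstar (p : ℝ) (N : ℕ) : ℝ :=
  if p < (N:ℝ) then ((N:ℝ) - p) / p else 0

/-!
Along a solution put `P(r) = r^N H(r) + α r^(N-1) u φ_p(u')`. The Pohozaev identity reads
`P' = r^(N-1) (N F̂(u) - α f̂(u) u + (α - (N - p)/p) |u'|^p)`, so for `α = N/p* ≥ (N - p)/p` the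
increments of `P` are controlled by the density `N F̂(u) - α f̂(u) u`. On `[0, r0)` the solution
decreases but stays in `[η d, d]`, where subcriticality makes the density at least a multiple of
`f*(d) d`; hence `P(r0) ≥ K1 f*(d) d r0^N`. The density is bounded below on all of `ℝ`, so from
`r0` to `r` the loss is at most a constant. Finally Young's inequality for `u φ_p(u')` bounds
`P(r)` by the left-hand side of the claim.
-/

section RealFunctions

theorem sub_le_sub_of_hasDerivAt_le {F G F' G' : ℝ → ℝ} {a b : ℝ} (hab : a ≤ b)
    (hF : ContinuousOn F (Icc a b)) (hG : ContinuousOn G (Icc a b))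
    (hF' : ∀ x ∈ Ioo a b, HasDerivAt F (F' x) x) (hG' : ∀ x ∈ Ioo a b, HasDerivAt G (G' x) x)
    (hle : ∀ x ∈ Ioo a b, F' x ≤ G' x) : F b - F a ≤ G b - G a := by
  have hmono : MonotoneOn (G - F) (Icc a b) := by
    refine monotoneOn_of_hasDerivWithinAt_nonneg (f' := G' - F') (convex_Icc a b) (hG.sub hF)
      ?_ ?_ <;> rw [interior_Icc]
    · exact fun x hx ↦ ((hG' x hx).sub (hF' x hx)).hasDerivWithinAt
    · exact fun x hx ↦ sub_nonneg.2 (hle x hx)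
  have := hmono (left_mem_Icc.2 hab) (right_mem_Icc.2 hab) hab
  simp only [Pi.sub_apply] at this
  linarith

theorem hasDerivAt_of_hasDerivAt_pow_mul {y : ℝ → ℝ} {n : ℕ} {x D : ℝ} (hx : x ≠ 0)
    (h : HasDerivAt (fun t ↦ t ^ n * y t) D x) : HasDerivAt y (D / x ^ n - n / x * y x) x := by
  have hxn : x ^ n ≠ 0 := pow_ne_zero n hx
  refine ((h.div (hasDerivAt_pow n x) hxn).congr_of_eventuallyEq ?_).congr_deriv ?_
  · filter_upwards [eventually_ne_nhds hx] with t ht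
    simp only [Pi.div_apply]
    field_simp
  · rcases n with _ | n
    · simp
    · simp only [Nat.add_sub_cancel]
      field_simp
      ring

theorem exists_nonneg_forall_neg_le_of_eventually_nonneg {X : Type*} [TopologicalSpace X]
    [Nonempty X] {h : X → ℝ} (hc : Continuous h) (hev : ∀ᶠ x in cocompact X, 0 ≤ h x) :
    ∃ K ≥ 0, ∀ x, -K ≤ h x := by
  obtain ⟨x, hx⟩ := (hc.min continuous_const).exists_forall_le' (f := fun y ↦ min (h y) 0)
    (Classical.arbitrary X) (hev.mono fun y hy ↦ by simp [hy])
  exact ⟨-min (h x) 0, neg_nonneg.2 (min_le_right _ _), fun y ↦ by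
    simpa only [neg_neg] using (hx y).trans (min_le_left _ _)⟩

end RealFunctions

section PhiP

variable {p q : ℝ}

theorem phip_zero : phip p 0 = 0 := mul_zero _

theorem abs_phip (hp : p ≠ 1) (s : ℝ) : |phip p s| = |s| ^ (p - 1) := by
  rcases eq_or_ne s 0 with rfl | hs
  · simp [phip, Real.zero_rpow (sub_ne_zero.2 hp)]
  · rw [phip, abs_mul, abs_of_nonneg (by positivity : 0 ≤ |s| ^ (p - 2)),
      ← Real.rpow_add_one (abs_pos.2 hs).ne']
    ring_nf

theorem phip_mul_self (hp : p ≠ 0) (s : ℝ) : phip p s * s = |s| ^ p := by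
  rcases eq_or_ne s 0 with rfl | hs
  · simp [Real.zero_rpow hp]
  · calc phip p s * s = |s| ^ (p - 2) * |s| ^ (2 : ℝ) := by
          rw [phip, Real.rpow_two, sq_abs]; ring
      _ = |s| ^ p := by rw [← Real.rpow_add (abs_pos.2 hs), sub_add_cancel]

theorem nonpos_of_phip_nonpos {s : ℝ} (h : phip p s ≤ 0) : s ≤ 0 := by
  contrapose! h
  exact mul_pos (Real.rpow_pos_of_pos (abs_pos.2 h.ne') _) h

theorem hasDerivAt_abs_rpow_div (hp : 1 < p) (s : ℝ) :
    HasDerivAt (fun x ↦ |x| ^ p / p) (phip p s) s := by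
  refine ((hasDerivAt_abs_rpow s hp).div_const p).congr_deriv ?_
  rw [phip, mul_assoc, mul_div_cancel_left₀ _ (by linarith)]

theorem abs_phip_rpow (hpq : p.HolderConjugate q) (s : ℝ) : |phip p s| ^ q = |s| ^ p := by
  rw [abs_phip hpq.lt.ne', ← Real.rpow_mul (abs_nonneg s), hpq.sub_one_mul_conj]

theorem phip_phip (hpq : p.HolderConjugate q) (s : ℝ) : phip q (phip p s) = s := by
  rcases eq_or_ne s 0 with rfl | hs
  · rw [phip_zero, phip_zero]
  · have hexp : (p - 1) * (q - 2) + (p - 2) = 0 := by linarith [hpq.sub_one_mul_conj]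
    rw [phip, abs_phip hpq.lt.ne', phip, ← Real.rpow_mul (abs_nonneg s), ← mul_assoc,
      ← Real.rpow_add (abs_pos.2 hs), hexp, Real.rpow_zero, one_mul]

theorem mul_phip_le (hpq : p.HolderConjugate q) (a s : ℝ) :
    a * phip p s ≤ |a| ^ p / p + |s| ^ p / q :=
  abs_phip_rpow hpq s ▸ Real.young_inequality a (phip p s) hpq

/- Only `φ_p ∘ w` is assumed differentiable (`w` itself may fail to be so where it vanishes):
`|w|^p / q` is the `C¹` function `|·|^q / q` of it, with derivative `φ_q (φ_p w) = w`. -/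
theorem hasDerivAt_abs_rpow_div_conj (hpq : p.HolderConjugate q) {w : ℝ → ℝ} {x y' : ℝ}
    (h : HasDerivAt (fun t ↦ phip p (w t)) y' x) :
    HasDerivAt (fun t ↦ |w t| ^ p / q) (w x * y') x := by
  have hcomp := (hasDerivAt_abs_rpow_div hpq.symm.lt (phip p (w x))).comp x h
  rw [phip_phip hpq] at hcomp
  exact hcomp.congr_of_eventuallyEq (.of_forall fun t ↦ by
    simp only [Function.comp_apply, abs_phip_rpow hpq])

end PhiP

section Primitive

variable {g : ℝ → ℝ}

theorem hasDerivAt_Fint (hg : Continuous g) (s : ℝ) : HasDerivAt (Fint g) (g s) s :=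
  intervalIntegral.integral_hasDerivAt_right (hg.intervalIntegrable _ _)
    hg.stronglyMeasurable.stronglyMeasurableAtFilter hg.continuousAt

theorem continuous_Fint (hg : Continuous g) : Continuous (Fint g) :=
  continuous_iff_continuousAt.2 fun s ↦ (hasDerivAt_Fint hg s).continuousAt

theorem monotoneOn_Fint (hg : Continuous g) (hpos : ∀ s, 1 ≤ s → 0 ≤ g s) :
    MonotoneOn (Fint g) (Ici 1) :=
  monotoneOn_of_hasDerivWithinAt_nonneg (convex_Ici 1) (continuous_Fint hg).continuousOn
    (fun s _ ↦ (hasDerivAt_Fint hg s).hasDerivWithinAt) fun s hs ↦ hpos s (interior_subset hs)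

theorem Fint_nonneg (hneg : ∀ s, s ≤ 1 → g s ≤ 0) (hpos : ∀ s, 1 ≤ s → 0 ≤ g s) (s : ℝ) :
    0 ≤ Fint g s := by
  rcases le_total 1 s with hs | hs
  · exact intervalIntegral.integral_nonneg hs fun σ hσ ↦ hpos σ hσ.1
  · rw [Fint, intervalIntegral.integral_symm, ← intervalIntegral.integral_neg]
    exact intervalIntegral.integral_nonneg hs fun σ hσ ↦ neg_nonneg.2 (hneg σ hσ.2)

end Primitive

section Nonlinearity

variable {f : ℝ → ℝ} {s d : ℝ}

theorem fhat_of_nonneg (hs : 0 ≤ s) : fhat f s = f s := if_pos hs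

theorem fhat_of_neg (hs : s < 0) : fhat f s = 0 := if_neg hs.not_ge

theorem continuous_fhat (hf : ContinuousOn f (Ici 0)) (h0 : f 0 = 0) : Continuous (fhat f) :=
  continuous_if_le continuous_const continuous_id hf continuousOn_const fun _ hs ↦ hs ▸ h0

theorem fhat_nonneg (heq : Feq f) (s : ℝ) (hs : 1 ≤ s) : 0 ≤ fhat f s := by
  rw [fhat_of_nonneg (by linarith)]
  rcases hs.eq_or_lt with rfl | hs
  · exact heq.2.1.ge
  · exact (heq.2.2.2 s hs).le

theorem fhat_nonpos (heq : Feq f) (s : ℝ) (hs : s ≤ 1) : fhat f s ≤ 0 := by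
  obtain ⟨hzero, hone, hneg, -⟩ := heq
  rcases lt_trichotomy s 0 with h | rfl | h
  · exact (fhat_of_neg h).le
  · exact ((fhat_of_nonneg le_rfl).trans hzero).le
  · rw [fhat_of_nonneg h.le]
    rcases hs.eq_or_lt with rfl | hs
    · exact hone.le
    · exact (hneg s h hs).le

theorem Fint_fhat (hs : 0 ≤ s) : Fint (fhat f) s = Fint f s :=
  intervalIntegral.integral_congr fun _ hσ ↦ fhat_of_nonneg ((le_min zero_le_one hs).trans hσ.1)

theorem Fint_fhat_nonneg (heq : Feq f) (s : ℝ) : 0 ≤ Fint (fhat f) s :=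
  Fint_nonneg (fhat_nonpos heq) (fhat_nonneg heq) s

theorem monotoneOn_Fint_fhat (hf : ContinuousOn f (Ici 0)) (heq : Feq f) :
    MonotoneOn (Fint (fhat f)) (Ici 1) :=
  monotoneOn_Fint (continuous_fhat hf heq.1) (fhat_nonneg heq)

theorem Fint_pos (hf : ContinuousOn f (Ici 0)) (hpos : ∀ s, 1 < s → 0 < f s) (hs : 1 < s) :
    0 < Fint f s :=
  intervalIntegral.intervalIntegral_pos_of_pos_on
    ((hf.mono fun _ hσ ↦ zero_le_one.trans hσ.1).intervalIntegrable_of_Icc hs.le)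
    (fun σ hσ ↦ hpos σ hσ.1) hs

theorem le_fstar (hf : ContinuousOn f (Ici 0)) (hs : s ∈ Icc 1 d) : f s ≤ fstar f d :=
  le_csSup (isCompact_Icc.bddAbove_image (hf.mono fun _ hx ↦ zero_le_one.trans hx.1)) ⟨s, hs, rfl⟩

theorem fstar_pos (hf : ContinuousOn f (Ici 0)) (hpos : ∀ s, 1 < s → 0 < f s) (hd : 1 < d) :
    0 < fstar f d :=
  (hpos d hd).trans_le (le_fstar hf ⟨hd.le, le_rfl⟩)

end Nonlinearity

section CriticalExponent

variable {p : ℝ} {N : ℕ}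

theorem nOverPstar_nonneg (hp : 0 < p) : 0 ≤ nOverPstar p N := by
  unfold nOverPstar
  split_ifs with h
  · exact div_nonneg (by linarith) hp.le
  · exact le_rfl

theorem sub_div_le_nOverPstar (hp : 0 < p) : (N - p) / p ≤ nOverPstar p N := by
  unfold nOverPstar
  split_ifs with h
  · exact le_rfl
  · exact div_nonpos_of_nonpos_of_nonneg (by linarith) hp.le

theorem nOverPstar_mul_lt (hp : 0 < p) (hN : 1 ≤ N) {L : ℝ} (hL : (L : EReal) < pstar p N) :
    nOverPstar p N * L < N := by
  unfold nOverPstar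
  unfold pstar at hL
  split_ifs at hL ⊢ with h
  · have hL' := (lt_div_iff₀ (by linarith)).1 (EReal.coe_lt_coe_iff.1 hL)
    rw [div_mul_eq_mul_div, div_lt_iff₀ hp]
    linarith
  · simpa using (by omega : 0 < N)

end CriticalExponent

section Pohozaev

/-- The Pohozaev functional `r^N H(r) + α r^(N-1) u(r) φ_p(u'(r))` of a radial solution `u` for the
nonlinearity `g`, where `H = |u'|^p / p' + ∫_1^u g`. -/
noncomputable def pohozaev (p : ℝ) (N : ℕ) (α : ℝ) (g u : ℝ → ℝ) (x : ℝ) : ℝ :=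
  x ^ N * (|deriv u x| ^ p / (p / (p - 1)) + Fint g (u x)) +
    α * (u x * (x ^ (N - 1) * phip p (deriv u x)))

/-- The zeroth-order term `N ∫_1^s g - α g(s) s` of the Pohozaev identity. -/
noncomputable def pohozaevDensity (N : ℕ) (α : ℝ) (g : ℝ → ℝ) (s : ℝ) : ℝ :=
  N * Fint g s - α * (g s * s)

variable {p : ℝ} {N : ℕ} {R1 R2 d α x : ℝ} {g u : ℝ → ℝ}

theorem continuous_pohozaevDensity (hg : Continuous g) : Continuous (pohozaevDensity N α g) :=
  (continuous_const.mul (continuous_Fint hg)).sub (continuous_const.mul (hg.mul continuous_id))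

theorem CauchySol.continuousOn (hu : CauchySol p N R1 R2 g u d) : ContinuousOn u (Icc R1 R2) :=
  fun x hx ↦ (hu.1 x hx).continuousAt.continuousWithinAt

theorem CauchySol.continuousOn_pohozaev (hp : 0 ≤ p) (hg : Continuous g)
    (hu : CauchySol p N R1 R2 g u d) : ContinuousOn (pohozaev p N α g u) (Icc R1 R2) := by
  obtain ⟨-, hu', -, -, hflux, -⟩ := id hu
  have hkin : ContinuousOn (fun x ↦ |deriv u x| ^ p / (p / (p - 1))) (Icc R1 R2) :=
    (hu'.abs.rpow_const fun _ _ ↦ Or.inr hp).div_const _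
  have hpot := (continuous_Fint hg).comp_continuousOn hu.continuousOn
  exact ((continuousOn_id.pow N).mul (hkin.add hpot)).add
    (continuousOn_const.mul (hu.continuousOn.mul hflux))

theorem CauchySol.hasDerivAt_energy (hp : 1 < p) (hg : Continuous g)
    (hu : CauchySol p N R1 R2 g u d) (hx : x ∈ Ioc R1 R2) (hx0 : x ≠ 0) :
    HasDerivAt (fun t ↦ |deriv u t| ^ p / (p / (p - 1)) + Fint g (u t))
      (-((N - 1 : ℕ) / x * |deriv u x| ^ p)) x := by
  have hflux := hasDerivAt_of_hasDerivAt_pow_mul hx0 (hu.2.2.2.2.2 x hx)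
  have hkin := hasDerivAt_abs_rpow_div_conj (Real.HolderConjugate.conjExponent hp) hflux
  have hpot := (hasDerivAt_Fint hg (u x)).comp x (hu.1 x (Ioc_subset_Icc_self hx)).hasDerivAt
  refine (hkin.add hpot).congr_deriv ?_
  rw [← phip_mul_self (by linarith) (deriv u x)]
  field_simp
  ring

theorem CauchySol.hasDerivAt_pohozaev (hp : 1 < p) (hN : 1 ≤ N) (hg : Continuous g)
    (hu : CauchySol p N R1 R2 g u d) (hx : x ∈ Ioc R1 R2) (hx0 : x ≠ 0) :
    HasDerivAt (pohozaev p N α g u)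
      (x ^ (N - 1) * (pohozaevDensity N α g (u x) + (α - (N - p) / p) * |deriv u x| ^ p)) x := by
  obtain ⟨n, rfl⟩ := Nat.exists_eq_add_of_le' hN
  have hflux := hu.2.2.2.2.2 x hx
  have hu' := (hu.1 x (Ioc_subset_Icc_self hx)).hasDerivAt
  refine (((hasDerivAt_pow (n + 1) x).mul (hu.hasDerivAt_energy hp hg hx hx0)).add
    ((hu'.mul hflux).const_mul α)).congr_deriv ?_
  rw [← phip_mul_self (by linarith) (deriv u x), pohozaevDensity]
  simp only [Nat.add_sub_cancel]
  push_cast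
  field_simp
  ring

theorem CauchySol.mul_pow_sub_pow_le_pohozaev_sub (hp : 1 < p) (hN : 1 ≤ N) (hg : Continuous g)
    (hu : CauchySol p N R1 R2 g u d) (hR1 : 0 ≤ R1) (hα : (N - p) / p ≤ α) {a b c : ℝ}
    (ha : R1 ≤ a) (hab : a ≤ b) (hb : b ≤ R2)
    (hc : ∀ t ∈ Ioo a b, N * c ≤ pohozaevDensity N α g (u t)) :
    c * (b ^ N - a ^ N) ≤ pohozaev p N α g u b - pohozaev p N α g u a := by
  have hpos : ∀ t ∈ Ioo a b, 0 < t := fun t ht ↦ (hR1.trans ha).trans_lt ht.1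
  rw [mul_sub]
  refine sub_le_sub_of_hasDerivAt_le (F := fun t ↦ c * t ^ N) hab (by fun_prop)
    ((hu.continuousOn_pohozaev (by linarith) hg).mono (Icc_subset_Icc ha hb))
    (fun t _ ↦ (hasDerivAt_pow N t).const_mul c)
    (fun t ht ↦ hu.hasDerivAt_pohozaev hp hN hg ⟨ha.trans_lt ht.1, ht.2.le.trans hb⟩
      (hpos t ht).ne') fun t ht ↦ ?_
  have hdissip : 0 ≤ (α - (N - p) / p) * |deriv u t| ^ p :=
    mul_nonneg (sub_nonneg.2 hα) (by positivity)
  calc c * (N * t ^ (N - 1)) = t ^ (N - 1) * (N * c) := by ring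
    _ ≤ _ := mul_le_mul_of_nonneg_left (by linarith [hc t ht]) (pow_pos (hpos t ht) _).le

theorem pohozaev_zero (hN : N ≠ 0) (hu' : deriv u 0 = 0) : pohozaev p N α g u 0 = 0 := by
  simp [pohozaev, hu', phip_zero, hN]

theorem pohozaev_le (hp : 1 < p) (hα : 0 ≤ α) (hx : x ∈ Icc 0 R2) (hG : 0 ≤ Fint g (u x)) :
    pohozaev p N α g u x ≤
      R2 ^ N * (|deriv u x| ^ p / (p / (p - 1)) + Fint g (u x)) +
        α * R2 ^ (N - 1) * (|u x| ^ p / p + |deriv u x| ^ p / (p / (p - 1))) := by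
  obtain ⟨hx0, hxR⟩ := hx
  have : 0 < p - 1 := by linarith
  have hYoung := mul_phip_le (Real.HolderConjugate.conjExponent hp) (u x) (deriv u x)
  rw [Real.conjExponent] at hYoung
  have hcross : u x * (x ^ (N - 1) * phip p (deriv u x)) ≤
      R2 ^ (N - 1) * (|u x| ^ p / p + |deriv u x| ^ p / (p / (p - 1))) := by
    rw [mul_left_comm]
    exact (mul_le_mul_of_nonneg_left hYoung (by positivity)).trans (by gcongr)
  rw [pohozaev, mul_assoc]
  gcongr

end Pohozaev

section FirstPhase

variable {p : ℝ} {N : ℕ} {R1 R2 η d r : ℝ} {g u : ℝ → ℝ}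

theorem CauchySol.antitoneOn_flux (hu : CauchySol p N R1 R2 g u d) (hR1 : 0 ≤ R1) (hr : r ≤ R2)
    (hg : ∀ x ∈ Ioo R1 r, 0 ≤ g (u x)) :
    AntitoneOn (fun x ↦ x ^ (N - 1) * phip p (deriv u x)) (Icc R1 r) := by
  obtain ⟨-, -, -, -, hflux, hflux'⟩ := hu
  refine antitoneOn_of_hasDerivWithinAt_nonpos (convex_Icc R1 r)
    (hflux.mono (Icc_subset_Icc_right hr)) ?_ ?_ (f' := fun x ↦ -(x ^ (N - 1)) * g (u x)) <;>
    rw [interior_Icc] <;> intro x hx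
  · exact (hflux' x ⟨hx.1, hx.2.le.trans hr⟩).hasDerivWithinAt
  · rw [neg_mul]
    exact neg_nonpos.2 (mul_nonneg (pow_nonneg (hR1.trans hx.1.le) _) (hg x hx))

theorem CauchySol.antitoneOn (hu : CauchySol p N R1 R2 g u d) (hR1 : 0 ≤ R1) (hr : r ≤ R2)
    (hg : ∀ x ∈ Ioo R1 r, 0 ≤ g (u x)) : AntitoneOn u (Icc R1 r) := by
  have hsub : Icc R1 r ⊆ Icc R1 R2 := Icc_subset_Icc_right hr
  refine antitoneOn_of_hasDerivWithinAt_nonpos (convex_Icc R1 r) (hu.continuousOn.mono hsub)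
    (fun x hx ↦ (hu.1 x (hsub (interior_subset hx))).hasDerivAt.hasDerivWithinAt) ?_
  rw [interior_Icc]
  intro x hx
  have hflux := hu.antitoneOn_flux hR1 hr hg ⟨le_rfl, hx.1.le.trans hx.2.le⟩ ⟨hx.1.le, hx.2.le⟩
    hx.1.le
  simp only [hu.2.2.2.1, phip_zero, mul_zero] at hflux
  exact nonpos_of_phip_nonpos
    (nonpos_of_mul_nonpos_right hflux (pow_pos (hR1.trans_lt hx.1) (N - 1)))

theorem rZero_mem (hR2 : 0 ≤ R2) : rZero R2 η d u ∈ Icc 0 R2 :=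
  ⟨Real.sSup_nonneg fun _ hx ↦ hx.1.1, csSup_le ⟨0, ⟨le_rfl, hR2⟩, by simp⟩ fun _ hx ↦ hx.1.2⟩

theorem lt_of_mem_Ico_rZero (hR2 : 0 ≤ R2) {t : ℝ} (ht : t ∈ Ico 0 (rZero R2 η d u)) :
    η * d < u t := by
  have hne : {x | x ∈ Icc 0 R2 ∧ ∀ s ∈ Ico 0 x, η * d < u s}.Nonempty :=
    ⟨0, ⟨le_rfl, hR2⟩, by simp⟩
  obtain ⟨x, hx, htx⟩ := exists_lt_of_lt_csSup hne ht.2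
  exact hx.2 t ⟨ht.1, htx⟩

theorem CauchySol.mem_Icc_of_mem_Ico_rZero (hu : CauchySol p N 0 R2 g u d) (hR2 : 0 ≤ R2)
    (hg : ∀ s, η * d < s → 0 ≤ g s) {t : ℝ} (ht : t ∈ Ico 0 (rZero R2 η d u)) :
    u t ∈ Icc (η * d) d := by
  refine ⟨(lt_of_mem_Ico_rZero hR2 ht).le, ?_⟩
  have hanti := hu.antitoneOn le_rfl (rZero_mem hR2).2
    fun x hx ↦ hg _ (lt_of_mem_Ico_rZero hR2 (Ioo_subset_Ico_self hx))
  rw [← hu.2.2.1]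
  exact hanti ⟨le_rfl, ht.1.trans ht.2.le⟩ (Ico_subset_Icc_self ht) ht.1

end FirstPhase

section Subcritical

variable {N : ℕ} {f : ℝ → ℝ} {η L α d s : ℝ}

theorem fstar_mul_le_of_div_le (hf : ContinuousOn f (Ici 0)) (heq : Feq f) (hηd : 1 < η * d)
    (h : fstar f d * d / Fint f (η * d) ≤ L) : fstar f d * d ≤ L * Fint (fhat f) (η * d) := by
  rw [Fint_fhat (by linarith)]
  exact (div_le_iff₀ (Fint_pos hf heq.2.2.2 hηd)).1 h

theorem pos_of_fstar_mul_div_le (hf : ContinuousOn f (Ici 0)) (hpos : ∀ s, 1 < s → 0 < f s)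
    (hd : 1 < d) (hηd : 1 < η * d) (h : fstar f d * d / Fint f (η * d) ≤ L) : 0 < L :=
  (div_pos (mul_pos (fstar_pos hf hpos hd) (by linarith)) (Fint_pos hf hpos hηd)).trans_le h

theorem mul_fstar_le_pohozaevDensity (hf : ContinuousOn f (Ici 0)) (heq : Feq f) (hα : 0 ≤ α)
    (hL : 0 < L) (hηd : 1 < η * d) (h : fstar f d * d ≤ L * Fint (fhat f) (η * d))
    (hs : s ∈ Icc (η * d) d) :
    (N / L - α) * (fstar f d * d) ≤ pohozaevDensity N α (fhat f) s := by
  have hs1 : 1 < s := hηd.trans_le hs.1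
  have hF : fstar f d * d / L ≤ Fint (fhat f) s :=
    ((div_le_iff₀' hL).2 h).trans (monotoneOn_Fint_fhat hf heq hηd.le hs1.le hs.1)
  have hfs : fhat f s * s ≤ fstar f d * d := by
    rw [fhat_of_nonneg (by linarith)]
    exact mul_le_mul (le_fstar hf ⟨hs1.le, hs.2⟩) hs.2 (by linarith)
      (fstar_pos hf heq.2.2.2 (hs1.trans_le hs.2)).le
  calc (N / L - α) * (fstar f d * d) = N * (fstar f d * d / L) - α * (fstar f d * d) := by ring
    _ ≤ N * Fint (fhat f) s - α * (fhat f s * s) := by gcongr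

theorem exists_pos_eventually_le_pohozaevDensity (hN : 1 ≤ N) (hf : ContinuousOn f (Ici 0))
    (heq : Feq f) (hη0 : 0 < η) (hη1 : η ≤ 1) (hα : 0 ≤ α) (hαL : α * L < N)
    (hev : ∀ᶠ d in atTop, fstar f d * d / Fint f (η * d) ≤ L) :
    ∃ K > 0, ∀ᶠ d in atTop, ∀ s ∈ Icc (η * d) d,
      N * (K * fstar f d * d) ≤ pohozaevDensity N α (fhat f) s := by
  have hN0 : (0 : ℝ) < N := by exact_mod_cast hN
  have hlarge : ∀ᶠ d in atTop, 1 / η < d := eventually_gt_atTop _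
  obtain ⟨d₀, hd₀, hηd₀⟩ := (hev.and hlarge).exists
  have hL : 0 < L := pos_of_fstar_mul_div_le hf heq.2.2.2
    (((one_le_div₀ hη0).2 hη1).trans_lt hηd₀) ((div_lt_iff₀' hη0).1 hηd₀) hd₀
  have hgap : 0 < N / L - α := sub_pos.2 ((lt_div_iff₀ hL).2 hαL)
  refine ⟨(N / L - α) / N, div_pos hgap hN0, ?_⟩
  filter_upwards [hev, hlarge] with d hd hηd s hs
  have hηd1 : 1 < η * d := (div_lt_iff₀' hη0).1 hηd
  calc N * ((N / L - α) / N * fstar f d * d) = (N / L - α) * (fstar f d * d) := by field_simp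
    _ ≤ _ := mul_fstar_le_pohozaevDensity hf heq hα hL hηd1
      (fstar_mul_le_of_div_le hf heq hηd1 hd) hs

theorem pohozaevDensity_fhat_nonneg_of_neg (heq : Feq f) (hs : s < 0) :
    0 ≤ pohozaevDensity N α (fhat f) s := by
  rw [pohozaevDensity, fhat_of_neg hs, zero_mul, mul_zero, sub_zero]
  exact mul_nonneg N.cast_nonneg (Fint_fhat_nonneg heq s)

theorem exists_nonneg_forall_neg_le_pohozaevDensity (hf : ContinuousOn f (Ici 0)) (heq : Feq f)
    (hev : ∀ᶠ s in atTop, 0 ≤ pohozaevDensity N α (fhat f) s) :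
    ∃ K ≥ 0, ∀ s, -K ≤ pohozaevDensity N α (fhat f) s := by
  refine exists_nonneg_forall_neg_le_of_eventually_nonneg
    (continuous_pohozaevDensity (continuous_fhat hf heq.1)) ?_
  rw [cocompact_eq_atBot_atTop, eventually_sup]
  exact ⟨(eventually_lt_atBot 0).mono fun s ↦ pohozaevDensity_fhat_nonneg_of_neg heq, hev⟩

theorem exists_pohozaevDensity_bounds (hN : 1 ≤ N) (hf : ContinuousOn f (Ici 0)) (heq : Feq f)
    (hη0 : 0 < η) (hη1 : η ≤ 1) (hα : 0 ≤ α) (hαL : α * L < N)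
    (hev : ∀ᶠ d in atTop, fstar f d * d / Fint f (η * d) ≤ L) :
    ∃ K1 > 0, ∃ K ≥ 0, ∃ dbar > 1 / η,
      (∀ d ≥ dbar, ∀ s ∈ Icc (η * d) d,
        N * (K1 * fstar f d * d) ≤ pohozaevDensity N α (fhat f) s) ∧
      ∀ s, N * -K ≤ pohozaevDensity N α (fhat f) s := by
  have hN0 : (0 : ℝ) < N := by exact_mod_cast hN
  obtain ⟨K1, hK1, hlow⟩ :=
    exists_pos_eventually_le_pohozaevDensity hN hf heq hη0 hη1 hα hαL hev
  have hnonneg : ∀ᶠ s in atTop, 0 ≤ pohozaevDensity N α (fhat f) s := by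
    filter_upwards [hlow, eventually_gt_atTop 1] with s hs hs1
    have := fstar_pos hf heq.2.2.2 hs1
    exact le_trans (by positivity) (hs s ⟨mul_le_of_le_one_left (by linarith) hη1, le_rfl⟩)
  obtain ⟨K, hK, hbelow⟩ := exists_nonneg_forall_neg_le_pohozaevDensity hf heq hnonneg
  obtain ⟨dbar, hdbar⟩ := (hlow.and (eventually_gt_atTop (1 / η))).exists_forall_of_atTop
  refine ⟨K1, hK1, K / N, by positivity, dbar, (hdbar dbar le_rfl).2,
    fun d hd ↦ (hdbar d hd).1, fun s ↦ ?_⟩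
  rw [mul_neg, mul_div_cancel₀ K hN0.ne']
  exact hbelow s

end Subcritical

theorem stmt17_general {p : ℝ} (hp : 1 < p) {N : ℕ} (hN : 1 ≤ N) {f : ℝ → ℝ}
    (hf : ContinuousOn f (Ici 0)) (heq : Feq f) {η : ℝ} (hη0 : 0 < η) (hη1 : η ≤ 1) {L : ℝ}
    (hL : (L : EReal) < pstar p N)
    (hev : ∀ᶠ s in atTop, fstar f s * s / Fint f (η * s) ≤ L) :
    ∃ K1 > 0, ∃ K ≥ 0, ∃ dbar > 1 / η, ∀ R2 ≥ 0,
      ∀ d ≥ dbar, ∀ u : ℝ → ℝ, CauchySol p N 0 R2 (fhat f) u d →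
        ∀ x ∈ Icc (rZero R2 η d u) R2,
          K1 * fstar f d * d * (rZero R2 η d u) ^ N - K * R2 ^ N ≤
            R2 ^ N * energy p f u x +
              nOverPstar p N * R2 ^ (N - 1) *
                (|u x| ^ p / p + |deriv u x| ^ p / (p / (p - 1))) := by
  have hp0 : 0 < p := by linarith
  have hα : 0 ≤ nOverPstar p N := nOverPstar_nonneg hp0
  obtain ⟨K1, hK1, K, hK, dbar, hdbar, hlow, hbelow⟩ := exists_pohozaevDensity_bounds hN hf heq
    hη0 hη1 hα (nOverPstar_mul_lt hp0 hN hL) hev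
  refine ⟨K1, hK1, K, hK, dbar, hdbar, fun R2 hR2 d hd u hu x hx ↦ ?_⟩
  have hηd : 1 < η * d := (div_lt_iff₀' hη0).1 (hdbar.lt.trans_le hd)
  have hr := rZero_mem (η := η) (d := d) (u := u) hR2
  have hincr {a b c : ℝ} := hu.mul_pow_sub_pow_le_pohozaev_sub hp hN (continuous_fhat hf heq.1)
    le_rfl (sub_div_le_nOverPstar hp0) (a := a) (b := b) (c := c)
  have hfirst := hincr le_rfl hr.1 hr.2 fun t ht ↦ hlow d hd _ <|
    hu.mem_Icc_of_mem_Ico_rZero hR2 (fun s hs ↦ fhat_nonneg heq s (hηd.trans hs).le)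
      (Ioo_subset_Ico_self ht)
  have hsecond := hincr hr.1 hx.1 hx.2 fun t _ ↦ hbelow (u t)
  rw [pohozaev_zero (by omega) hu.2.2.2.1, zero_pow (by omega), sub_zero, sub_zero] at hfirst
  have hx0 : 0 ≤ x := hr.1.trans hx.1
  have hloss : K * (x ^ N - rZero R2 η d u ^ N) ≤ K * R2 ^ N :=
    mul_le_mul_of_nonneg_left
      ((sub_le_self _ (pow_nonneg hr.1 N)).trans (pow_le_pow_left₀ hx0 hx.2 N)) hK
  refine le_trans ?_ (pohozaev_le hp hα ⟨hx0, hx.2⟩ (Fint_fhat_nonneg heq (u x)))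
  linarith

theorem stmt17 (p : ℝ) (hp : 1 < p) (N : ℕ) (hN : 1 ≤ N)
    (R2 : ℝ) (hR2 : 0 < R2)
    (f : ℝ → ℝ) (hreg : Freg f) (heq : Feq f) (h0 : Fzero p f)
    (η : ℝ) (hsubc : FsubcWith p N f η) :
    ∃ K1 : ℝ, 0 < K1 ∧ ∃ K2 : ℝ, 0 ≤ K2 ∧ ∃ dbar : ℝ, 1 / η < dbar ∧
      ∀ d : ℝ, dbar ≤ d → ∀ u : ℝ → ℝ, CauchySol p N 0 R2 (fhat f) u d →
        ∀ x ∈ Icc (rZero R2 η d u) R2,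
          K1 * fstar f d * d * (rZero R2 η d u) ^ N - K2 ≤
            R2 ^ N * energy p f u x +
              nOverPstar p N * R2 ^ (N - 1) *
                (|u x| ^ p / p + |deriv u x| ^ p / (p / (p - 1))) := by
  obtain ⟨-, hη0, hη1, L, hL, hev⟩ := hsubc
  obtain ⟨K1, hK1, K, hK, dbar, hdbar, h⟩ := stmt17_general hp hN hreg.1 heq hη0 hη1.le hL hev
  exact ⟨K1, hK1, K * R2 ^ N, by positivity, dbar, hdbar, h R2 hR2.le⟩
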